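/- arXiv:1712.01973 — 2 statements merged into one kernel-verified Lean document; each statement's English description precedes it below -/
import Mathlib

section
/- Let P = ⋂_{i=1}^n {x ∈ ℝ^d : ⟨a_i, x⟩ ≤ b_i} be a full-dimensional polytope (compact with nonempty interior) and let s₀ > 0. Then there exists δ > 0 such that: (i) for every s with s₀ − δ < s < s₀, L_P(s₀) − L_P(s) equals the number of points x ∈ ℤ^d with x ∈ s₀•P and ⟨a_i, x⟩ = s₀ b_i for some i with b_i > 0 (the integer points in the front facets of s₀•P); and (ii) for every s with s₀ < s < s₀ + δ, L_P(s₀) − L_P(s) equals the number of points x ∈ ℤ^d with x ∈ s₀•P and ⟨a_i, x⟩ = s₀ b_i for some i with b_i < 0 (the integer points in the back facets of s₀•P). -/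
open Set MeasureTheory Pointwise

/-- The set of integer lattice points in `ℝ^d` (as `Fin d → ℝ`). -/
def latticePts (d : ℕ) : Set (Fin d → ℝ) := {x | ∀ i, ∃ m : ℤ, x i = m}

/-- The real-parameter Ehrhart function: number of lattice points in `s • P`. -/
noncomputable def ehrhart {d : ℕ} (P : Set (Fin d → ℝ)) (s : ℝ) : ℕ :=
  ((s • P) ∩ latticePts d).ncard

/-- Translate of a set by a vector. -/
def translateSet {d : ℕ} (P : Set (Fin d → ℝ)) (v : Fin d → ℝ) : Set (Fin d → ℝ) :=
  (fun x => x + v) '' P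

/-- A polytope: convex hull of a nonempty finite set of points. -/
def IsPolytope {d : ℕ} (P : Set (Fin d → ℝ)) : Prop :=
  ∃ V : Finset (Fin d → ℝ), V.Nonempty ∧ P = convexHull ℝ (V : Set (Fin d → ℝ))

/-- A rational polytope: convex hull of a nonempty finite set of rational points. -/
def IsRationalPolytope {d : ℕ} (P : Set (Fin d → ℝ)) : Prop :=
  ∃ V : Finset (Fin d → ℝ), V.Nonempty ∧ (∀ v ∈ V, ∀ i, ∃ q : ℚ, v i = (q : ℝ)) ∧
    P = convexHull ℝ (V : Set (Fin d → ℝ))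

/-- Standard inner product on `Fin d → ℝ`. -/
def dotProd {d : ℕ} (a x : Fin d → ℝ) : ℝ := ∑ i, a i * x i

/-- A semi-rational polytope: a polytope expressible as a finite intersection of
half-spaces with integer normal vectors. -/
def IsSemiRationalPolytope {d : ℕ} (P : Set (Fin d → ℝ)) : Prop :=
  IsPolytope P ∧ ∃ (n : ℕ) (a : Fin n → Fin d → ℤ) (b : Fin n → ℝ),
    P = ⋂ i, {x : Fin d → ℝ | dotProd (fun j => (a i j : ℝ)) x ≤ b i}

/-!
For `P = {x | ∀ i, f i x ≤ b i}` and `s > 0`, membership `x ∈ s • P` means `f i x ≤ s * b i` for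
all `i`. As `s` moves slightly away from `s₀`, a strict inequality or a violated one keeps its
status, so only tight constraints `f i x = s₀ * b i` can change, and they fail exactly when
`s * b i < s₀ * b i`. Since `P` is bounded, only finitely many lattice points matter near `s₀`,
hence one neighbourhood of `s₀` serves all of them.
-/

open Bornology Filter Topology

theorem eventually_const_le_iff_of_continuousAt {X α : Type*} [TopologicalSpace X] [LinearOrder α]
    [TopologicalSpace α] [OrderTopology α] {g : X → α} {x₀ : X} (hg : ContinuousAt g x₀) (t : α) :
    ∀ᶠ x in 𝓝 x₀, t ≤ g x ↔ t ≤ g x₀ ∧ ¬(g x < g x₀ ∧ t = g x₀) := by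
  rcases lt_trichotomy t (g x₀) with hlt | rfl | hgt
  · filter_upwards [hg.eventually_const_lt hlt] with x hx
    simp only [hx.le, hlt.le, hlt.ne, and_false, not_false_eq_true, and_self]
  · simp only [le_refl, and_true, true_and, not_lt, eventually_true]
  · filter_upwards [hg.eventually_lt_const hgt] with x hx
    simp only [hx.not_ge, hgt.not_ge, false_and]

section Polyhedron

variable {ι E : Type*} [AddCommGroup E] [Module ℝ E]

/-- The polyhedron with the half-space description `f i x ≤ b i`. Constraints may be redundant. -/
def polyhedron (f : ι → Module.Dual ℝ E) (b : ι → ℝ) : Set E :=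
  ⋂ i, {x | f i x ≤ b i}

/-- The union of the faces of `s • polyhedron f b` on which some constraint indexed by `I` is tight.
The front facets are given by `I = {i | 0 < b i}`, the back facets by `I = {i | b i < 0}`. -/
def faceUnion (f : ι → Module.Dual ℝ E) (b : ι → ℝ) (s : ℝ) (I : Set ι) : Set E :=
  {x | x ∈ s • polyhedron f b ∧ ∃ i ∈ I, f i x = s * b i}

variable (f : ι → Module.Dual ℝ E) (b : ι → ℝ) {s s₀ : ℝ}

theorem mem_smul_polyhedron_iff (hs : 0 < s) (x : E) :
    x ∈ s • polyhedron f b ↔ ∀ i, f i x ≤ s * b i := by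
  simp only [polyhedron, mem_smul_set_iff_inv_smul_mem₀ hs.ne', mem_iInter, mem_ofPred_eq, map_smul,
    smul_eq_mul, inv_mul_le_iff₀ hs]

theorem eventually_mem_smul_polyhedron_iff [Finite ι] (hs₀ : 0 < s₀) (x : E) :
    ∀ᶠ s in 𝓝 s₀, x ∈ s • polyhedron f b ↔
      x ∈ s₀ • polyhedron f b ∧ x ∉ faceUnion f b s₀ {i | s * b i < s₀ * b i} := by
  have constraint_iff : ∀ᶠ s in 𝓝 s₀, ∀ i, f i x ≤ s * b i ↔
      f i x ≤ s₀ * b i ∧ ¬(s * b i < s₀ * b i ∧ f i x = s₀ * b i) :=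
    eventually_all.2 fun i =>
      eventually_const_le_iff_of_continuousAt (continuousAt_id.mul continuousAt_const) (f i x)
  filter_upwards [constraint_iff, lt_mem_nhds hs₀] with s hiff hs
  simp only [faceUnion, mem_ofPred_eq, mem_smul_polyhedron_iff f b hs,
    mem_smul_polyhedron_iff f b hs₀, hiff, forall_and, not_and, not_exists]
  tauto

end Polyhedron

theorem exists_isBounded_eventually_smul_subset {𝕜 E : Type*} [NormedField 𝕜]
    [SeminormedAddCommGroup E] [NormedSpace 𝕜 E] {P : Set E} (hP : IsBounded P) (s₀ : 𝕜) :
    ∃ K : Set E, IsBounded K ∧ ∀ᶠ s in 𝓝 s₀, s • P ⊆ K := by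
  obtain ⟨R, hR⟩ := hP.exists_norm_le
  refine ⟨Metric.closedBall 0 ((‖s₀‖ + 1) * R), Metric.isBounded_closedBall, ?_⟩
  filter_upwards [continuousAt_id.norm.eventually_lt_const (lt_add_one ‖s₀‖)] with s hs
  rintro _ ⟨y, hy, rfl⟩
  rw [mem_closedBall_zero_iff]
  calc ‖s • y‖ = ‖s‖ * ‖y‖ := norm_smul s y
    _ ≤ (‖s₀‖ + 1) * R := by gcongr; exacts [hs.le, hR y hy]

section DiscreteSet

variable {ι E : Type*} [Finite ι] [SeminormedAddCommGroup E] [NormedSpace ℝ E]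
  {f : ι → Module.Dual ℝ E} {b : ι → ℝ} {Λ : Set E} {s₀ : ℝ}

theorem eventually_smul_polyhedron_inter_eq (hP : IsBounded (polyhedron f b))
    (hΛ : ∀ K, IsBounded K → (K ∩ Λ).Finite) (hs₀ : 0 < s₀) :
    ∀ᶠ s in 𝓝 s₀, s • polyhedron f b ∩ Λ =
      (s₀ • polyhedron f b ∩ Λ) \ (Λ ∩ faceUnion f b s₀ {i | s * b i < s₀ * b i}) := by
  obtain ⟨K, hK, hsub⟩ := exists_isBounded_eventually_smul_subset hP s₀
  have mem_iff := (eventually_all_finite (hΛ K hK)).2 fun x _ =>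
    eventually_mem_smul_polyhedron_iff f b hs₀ x
  filter_upwards [hsub, mem_iff] with s hsK hiff
  ext x
  have hs₀K : s₀ • polyhedron f b ⊆ K := hsub.self_of_nhds
  grind

theorem eventually_ncard_smul_polyhedron_inter_sub_eq (hP : IsBounded (polyhedron f b))
    (hΛ : ∀ K, IsBounded K → (K ∩ Λ).Finite) (hs₀ : 0 < s₀) :
    ∀ᶠ s in 𝓝 s₀,
      ((s₀ • polyhedron f b ∩ Λ).ncard : ℤ) - ((s • polyhedron f b ∩ Λ).ncard : ℤ) =
        (Λ ∩ faceUnion f b s₀ {i | s * b i < s₀ * b i}).ncard := by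
  filter_upwards [eventually_smul_polyhedron_inter_eq hP hΛ hs₀] with s hs
  have hsub : Λ ∩ faceUnion f b s₀ {i | s * b i < s₀ * b i} ⊆ s₀ • polyhedron f b ∩ Λ :=
    fun x hx => ⟨hx.2.1, hx.1⟩
  have hcard := ncard_sdiff_add_ncard_of_subset hsub (hΛ _ (hP.smul₀ s₀))
  rw [hs]
  lia

theorem stmt7_general (hP : IsBounded (polyhedron f b))
    (hΛ : ∀ K, IsBounded K → (K ∩ Λ).Finite) (hs₀ : 0 < s₀) :
    ∃ δ : ℝ, 0 < δ ∧
      (∀ s : ℝ, s₀ - δ < s → s < s₀ →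
        ((s₀ • polyhedron f b ∩ Λ).ncard : ℤ) - ((s • polyhedron f b ∩ Λ).ncard : ℤ) =
          (Λ ∩ faceUnion f b s₀ {i | 0 < b i}).ncard) ∧
      (∀ s : ℝ, s₀ < s → s < s₀ + δ →
        ((s₀ • polyhedron f b ∩ Λ).ncard : ℤ) - ((s • polyhedron f b ∩ Λ).ncard : ℤ) =
          (Λ ∩ faceUnion f b s₀ {i | b i < 0}).ncard) := by
  obtain ⟨δ, hδ, hjump⟩ := Metric.eventually_nhds_iff.1
    (eventually_ncard_smul_polyhedron_inter_sub_eq hP hΛ hs₀)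
  refine ⟨δ, hδ, fun s hsδ hs => ?_, fun s hs hsδ => ?_⟩
  · have front (i : ι) : s * b i < s₀ * b i ↔ 0 < b i := by
      rw [← sub_pos, ← sub_mul, mul_pos_iff_of_pos_left (sub_pos.2 hs)]
    have hdist : dist s s₀ < δ := abs_sub_lt_iff.2 ⟨by linarith, by linarith⟩
    simpa only [front] using hjump hdist
  · have back (i : ι) : s * b i < s₀ * b i ↔ b i < 0 := by
      rw [← sub_neg, ← sub_mul, ← smul_eq_mul, smul_neg_iff_of_pos_left (sub_pos.2 hs)]
    have hdist : dist s s₀ < δ := abs_sub_lt_iff.2 ⟨by linarith, by linarith⟩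
    simpa only [back] using hjump hdist

end DiscreteSet

theorem latticePts_eq_span (d : ℕ) :
    latticePts d = (Submodule.span ℤ (range (Pi.basisFun ℝ (Fin d))) : Set (Fin d → ℝ)) := by
  ext x
  simp only [latticePts, mem_ofPred_eq, SetLike.mem_coe, Module.Basis.mem_span_iff_repr_mem,
    Pi.basisFun_repr, mem_range, algebraMap_int_eq, eq_intCast, eq_comm]

theorem finite_inter_latticePts_of_isBounded {d : ℕ} {K : Set (Fin d → ℝ)} (hK : IsBounded K) :
    (K ∩ latticePts d).Finite := by
  rw [latticePts_eq_span]
  exact ZSpan.setFinite_inter _ hK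

/-- near a dilation parameter `s₀`, the jumps of the Ehrhart function of a
full-dimensional polytope are counted by the lattice points in the front (resp. back)
facets of `s₀ • P`. -/
theorem stmt7 {d n : ℕ} (a : Fin n → Fin d → ℝ) (b : Fin n → ℝ)
    (P : Set (Fin d → ℝ))
    (hPdef : P = ⋂ i, {x : Fin d → ℝ | dotProd (a i) x ≤ b i})
    (hcomp : IsCompact P) (hint : (interior P).Nonempty)
    (s₀ : ℝ) (hs₀ : 0 < s₀) :
    ∃ δ : ℝ, 0 < δ ∧
      (∀ s : ℝ, s₀ - δ < s → s < s₀ →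
        (ehrhart P s₀ : ℤ) - (ehrhart P s : ℤ) =
          ({x : Fin d → ℝ | x ∈ latticePts d ∧ x ∈ s₀ • P ∧
            ∃ i, 0 < b i ∧ dotProd (a i) x = s₀ * b i}).ncard) ∧
      (∀ s : ℝ, s₀ < s → s < s₀ + δ →
        (ehrhart P s₀ : ℤ) - (ehrhart P s : ℤ) =
          ({x : Fin d → ℝ | x ∈ latticePts d ∧ x ∈ s₀ • P ∧
            ∃ i, b i < 0 ∧ dotProd (a i) x = s₀ * b i}).ncard) := by
  subst hPdef
  exact stmt7_general (f := fun i => dotProductBilin ℝ ℝ (a i)) hcomp.isBounded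
    (fun _ => finite_inter_latticePts_of_isBounded) hs₀
end

section
/- Let P and Q be full-dimensional semi-rational polytopes in ℝ^d such that L_{P+w}(s) = L_{Q+w}(s) for every integer vector w ∈ ℤ^d and every real s > 0. Then P = Q. -/
open Set MeasureTheory Pointwise

/-!
Fix one dilation factor `s > 0` so small that `s • (P ∪ Q + w)` has sup-norm diameter below `1` and
hence contains at most one lattice point. If that point is `n`, the counts for `P` and `Q` record
whether `s⁻¹ • n - w` lies in `P` and in `Q`, so `P` and `Q` contain the same points of the form
`s⁻¹ • n - w` with `n` and `w` integral. For irrational `s` these points are dense, and a closed set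
which is the closure of its interior is determined by its members in a dense set.
-/

lemma dense_range_mul_intCast_sub_intCast {r : ℝ} (hr : Irrational r) :
    Dense (range fun p : ℤ × ℤ ↦ r * p.1 - p.2) := by
  have hdense : Dense (AddSubgroup.closure {r, 1} : Set ℝ) :=
    dense_addSubgroupClosure_pair_iff.2 (by simpa only [div_one] using hr)
  refine hdense.mono fun x hx ↦ ?_
  obtain ⟨n, m, rfl⟩ := AddSubgroup.mem_closure_pair.1 hx
  exact ⟨(n, -m), by push_cast; simp only [zsmul_eq_mul]; ring⟩

lemma dense_range_smul_intCast_sub_intCast {ι : Type*} {r : ℝ} (hr : Irrational r) :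
    Dense (range fun p : (ι → ℤ) × (ι → ℤ) ↦
      r • (fun i ↦ (p.1 i : ℝ)) - fun i ↦ (p.2 i : ℝ)) := by
  refine (dense_pi univ fun (_ : ι) _ ↦ dense_range_mul_intCast_sub_intCast hr).mono fun x hx ↦ ?_
  choose p hp using fun i ↦ hx i (mem_univ i)
  exact ⟨(fun i ↦ (p i).1, fun i ↦ (p i).2), funext hp⟩

lemma exists_irrational_pos_mul_lt_one (a : ℝ) : ∃ s : ℝ, Irrational s ∧ 0 < s ∧ s * a < 1 := by
  obtain ⟨s, hs, hs_pos, hs_lt⟩ := exists_irrational_btwn (show (0 : ℝ) < (|a| + 1)⁻¹ by positivity)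
  refine ⟨s, hs, hs_pos, ?_⟩
  calc s * a ≤ s * |a| := by gcongr; exact le_abs_self a
    _ < s * (|a| + 1) := by gcongr; exact lt_add_one _
    _ < 1 := (lt_inv_mul_iff₀' (by positivity)).1 (by simpa only [mul_one] using hs_lt)

section Ehrhart

variable {d : ℕ} {P Q K : Set (Fin d → ℝ)} {s : ℝ}

lemma intCast_mem_latticePts (n : Fin d → ℤ) : (fun i ↦ (n i : ℝ)) ∈ latticePts d :=
  fun i ↦ ⟨n i, rfl⟩

lemma eq_of_mem_latticePts_of_dist_lt_one {x y : Fin d → ℝ} (hx : x ∈ latticePts d)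
    (hy : y ∈ latticePts d) (hxy : dist x y < 1) : x = y := by
  funext i
  obtain ⟨m, hm⟩ := hx i
  obtain ⟨n, hn⟩ := hy i
  have hmn : dist m n < 1 := by
    rw [← Int.dist_cast_real, ← hm, ← hn]
    exact (dist_le_pi_dist x y i).trans_lt hxy
  have hmn_abs : |m - n| < 1 := by
    rw [Int.dist_eq] at hmn
    exact_mod_cast hmn
  rw [hm, hn, sub_eq_zero.1 (Int.abs_lt_one_iff.1 hmn_abs)]

lemma subsingleton_inter_latticePts (hK : Bornology.IsBounded K) (hdiam : Metric.diam K < 1) :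
    (K ∩ latticePts d).Subsingleton := fun _ hx _ hy ↦
  eq_of_mem_latticePts_of_dist_lt_one hx.2 hy.2
    ((Metric.dist_le_diam_of_mem hK hx.1 hy.1).trans_lt hdiam)

lemma translateSet_mono (hPQ : P ⊆ Q) (w : Fin d → ℝ) : translateSet P w ⊆ translateSet Q w :=
  image_mono hPQ

lemma mem_smul_translateSet_iff (hs : s ≠ 0) (w x : Fin d → ℝ) :
    x ∈ s • translateSet P w ↔ s⁻¹ • x - w ∈ P := by
  rw [mem_smul_set_iff_inv_smul_mem₀ hs, translateSet, image_add_right, mem_preimage,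
    sub_eq_add_neg]

lemma subsingleton_smul_translateSet_inter_latticePts (hK : Bornology.IsBounded K) (hs : 0 ≤ s)
    (hdiam : s * Metric.diam K < 1) (w : Fin d → ℝ) :
    ((s • translateSet K w) ∩ latticePts d).Subsingleton := by
  have hisom : Isometry fun x : Fin d → ℝ ↦ x + w := isometry_add_right w
  refine subsingleton_inter_latticePts ((hisom.lipschitz.isBounded_image hK).smul₀ s) ?_
  rwa [diam_smul₀, translateSet, hisom.diam_image, Real.norm_of_nonneg hs]

lemma mem_of_ehrhart_translateSet_eq (hPQ : Bornology.IsBounded (P ∪ Q)) (hs : 0 < s)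
    (hdiam : s * Metric.diam (P ∪ Q) < 1) {n w : Fin d → ℝ} (hn : n ∈ latticePts d)
    (heq : ehrhart (translateSet P w) s = ehrhart (translateSet Q w) s)
    (hP : s⁻¹ • n - w ∈ P) : s⁻¹ • n - w ∈ Q := by
  have hsub := subsingleton_smul_translateSet_inter_latticePts hPQ hs.le hdiam w
  have hPsub : (s • translateSet P w) ∩ latticePts d ⊆
      (s • translateSet (P ∪ Q) w) ∩ latticePts d :=
    inter_subset_inter_left _ (smul_set_mono (translateSet_mono subset_union_left w))
  have hnP : n ∈ (s • translateSet P w) ∩ latticePts d :=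
    ⟨(mem_smul_translateSet_iff hs.ne' w n).2 hP, hn⟩
  have hcount : ehrhart (translateSet Q w) s ≠ 0 :=
    heq ▸ ncard_ne_zero_of_mem hnP (hsub.finite.subset hPsub)
  obtain ⟨m, hmQ, hm⟩ := nonempty_of_ncard_ne_zero hcount
  have hmn : m = n :=
    hsub ⟨smul_set_mono (translateSet_mono subset_union_right w) hmQ, hm⟩ (hPsub hnP)
  exact (mem_smul_translateSet_iff hs.ne' w n).1 (hmn ▸ hmQ)

lemma subset_of_ehrhart_translateSet_eq (hPQ : Bornology.IsBounded (P ∪ Q))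
    (hP : P ⊆ closure (interior P)) (hQ : IsClosed Q) (hs_irr : Irrational s) (hs : 0 < s)
    (hdiam : s * Metric.diam (P ∪ Q) < 1)
    (h : ∀ w : Fin d → ℤ, ehrhart (translateSet P fun i ↦ (w i : ℝ)) s =
      ehrhart (translateSet Q fun i ↦ (w i : ℝ)) s) :
    P ⊆ Q := by
  have hdense := dense_range_smul_intCast_sub_intCast (ι := Fin d) hs_irr.inv
  refine hP.trans (closure_minimal ?_ hQ)
  refine (hdense.open_subset_closure_inter isOpen_interior).trans (closure_minimal ?_ hQ)
  rintro _ ⟨hx, ⟨n, w⟩, rfl⟩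
  exact mem_of_ehrhart_translateSet_eq hPQ hs hdiam (intCast_mem_latticePts n) (h w)
    (interior_subset hx)

end Ehrhart

lemma IsPolytope.isCompact {d : ℕ} {P : Set (Fin d → ℝ)} (hP : IsPolytope P) : IsCompact P := by
  obtain ⟨V, -, rfl⟩ := hP
  exact V.finite_toSet.isCompact_convexHull ℝ

lemma IsPolytope.convex {d : ℕ} {P : Set (Fin d → ℝ)} (hP : IsPolytope P) : Convex ℝ P := by
  obtain ⟨V, -, rfl⟩ := hP
  exact convex_convexHull ℝ _

lemma IsPolytope.closure_interior_eq {d : ℕ} {P : Set (Fin d → ℝ)} (hP : IsPolytope P)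
    (hfull : (interior P).Nonempty) : closure (interior P) = P := by
  rw [hP.convex.closure_interior_eq_closure_of_nonempty_interior hfull,
    hP.isCompact.isClosed.closure_eq]

theorem stmt13_general {d : ℕ} {P Q : Set (Fin d → ℝ)} {s : ℝ}
    (hPQ : Bornology.IsBounded (P ∪ Q))
    (hP : closure (interior P) = P) (hQ : closure (interior Q) = Q)
    (hs_irr : Irrational s) (hs : 0 < s) (hdiam : s * Metric.diam (P ∪ Q) < 1)
    (h : ∀ w : Fin d → ℤ, ehrhart (translateSet P fun i ↦ (w i : ℝ)) s =
      ehrhart (translateSet Q fun i ↦ (w i : ℝ)) s) :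
    P = Q :=
  Subset.antisymm
    (subset_of_ehrhart_translateSet_eq hPQ hP.ge (hQ ▸ isClosed_closure) hs_irr hs hdiam h)
    (subset_of_ehrhart_translateSet_eq (union_comm P Q ▸ hPQ) hQ.ge (hP ▸ isClosed_closure)
      hs_irr hs (union_comm P Q ▸ hdiam) fun w ↦ (h w).symm)

/-- two full-dimensional semi-rational polytopes with the same real
Ehrhart functions on all integer translates are equal. -/
theorem stmt13 {d : ℕ} (P Q : Set (Fin d → ℝ))
    (hP : IsSemiRationalPolytope P) (hQ : IsSemiRationalPolytope Q)
    (hPfull : (interior P).Nonempty) (hQfull : (interior Q).Nonempty)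
    (h : ∀ (w : Fin d → ℤ) (s : ℝ), 0 < s →
      ehrhart (translateSet P (fun i => (w i : ℝ))) s =
      ehrhart (translateSet Q (fun i => (w i : ℝ))) s) :
    P = Q := by
  obtain ⟨s, hs_irr, hs, hdiam⟩ := exists_irrational_pos_mul_lt_one (Metric.diam (P ∪ Q))
  exact stmt13_general (hP.1.isCompact.union hQ.1.isCompact).isBounded
    (hP.1.closure_interior_eq hPfull) (hQ.1.closure_interior_eq hQfull) hs_irr hs hdiam
    fun w ↦ h w s hs
end
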